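/- There is an absolute constant c > 0 such that for all positive integers n, m, k with 2m ≤ k·n and k ≤ m, the number of labelled graphs (possibly with loops but without parallel edges) on the vertex set {1,…,n} with exactly m edges and queue-number at most k is at most (c·k·n/m)^(2m) · n!. -/

import Mathlib

/-!
A queue is the same thing as a chain in the product order on pairs. Such a chain is determined by
the multiset of its first coordinates together with the multiset of its second coordinates: sort
both and zip (`chain_ext`). Hence a `k`-queue on `{1, …, n}` with `m` edges, its edges coloured by
the `k` parts, is determined by two multisets of size `m`, recording (colour, first endpoint) and
(colour, second endpoint) of all edges. A graph of queue-number at most `k` is then determined by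
these two multisets and the vertex ordering (`exists_isCode`, `IsCode.unique`), which bounds the
count by `n! * multichoose (k * (n + 1)) m ^ 2`. Vertices are recorded in `Fin (n + 1)` instead of
`{1, …, n}`, which only affects the constant. Finally `m ! ≥ (m / e) ^ m` and `2 * m ≤ k * n` give
the stated form with `c = 8` (`multichoose_bound`).
-/

/-- Two edges `(v,w)` and `(x,y)` (each with first coordinate ≤ second) of an
ordered graph are nested (one is nested inside the other). -/
def Nested (e f : ℕ × ℕ) : Prop :=
  (e.1 < f.1 ∧ f.2 < e.2) ∨ (f.1 < e.1 ∧ e.2 < f.2)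

/-- `E` is the edge set of an ordered graph on the vertex set `{1, …, n}`:
each edge is a pair `(v,w)` with `1 ≤ v ≤ w ≤ n` (loops allowed, no parallel edges). -/
def IsOrderedGraph (n : ℕ) (E : Finset (ℕ × ℕ)) : Prop :=
  ∀ e ∈ E, 1 ≤ e.1 ∧ e.1 ≤ e.2 ∧ e.2 ≤ n

/-- An edge set is a queue if no two of its edges are nested. -/
def IsQueue (E : Finset (ℕ × ℕ)) : Prop :=
  ∀ e ∈ E, ∀ f ∈ E, ¬ Nested e f

/-- An edge set is a `k`-queue if it can be partitioned into at most `k` parts,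
each of which is a queue. -/
def IsKQueue (k : ℕ) (E : Finset (ℕ × ℕ)) : Prop :=
  ∃ parts : Fin k → Finset (ℕ × ℕ),
    (∀ e ∈ E, ∃ i, e ∈ parts i) ∧
    (∀ i, parts i ⊆ E) ∧
    (∀ i j, i ≠ j → Disjoint (parts i) (parts j)) ∧
    (∀ i, IsQueue (parts i))


/-- The edge set obtained from `E` by relabelling the vertices according to the
permutation `σ`, normalising each edge so its first endpoint is the smaller one. -/
def relabel (σ : Equiv.Perm ℕ) (E : Finset (ℕ × ℕ)) : Finset (ℕ × ℕ) :=
  E.image fun e => (min (σ e.1) (σ e.2), max (σ e.1) (σ e.2))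


/-- The labelled graph `E` on `{1, …, n}` has queue-number at most `k`: under
some ordering (permutation) of the vertices `{1, …, n}`, its edge set becomes a
`k`-queue. -/
def QueueNumberLE (n k : ℕ) (E : Finset (ℕ × ℕ)) : Prop :=
  ∃ σ : Equiv.Perm ℕ, (∀ v ∈ Finset.Icc 1 n, σ v ∈ Finset.Icc 1 n) ∧
    IsKQueue k (relabel σ E)

/-- A chain in the product order can be listed so that both coordinates are weakly increasing. -/
lemma exists_sorted_list (P : Finset (ℕ × ℕ)) (hP : IsQueue P) :
    ∃ l : List (ℕ × ℕ), (l : Multiset (ℕ × ℕ)) = P.val ∧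
      (l.map Prod.fst).Pairwise (· ≤ ·) ∧ (l.map Prod.snd).Pairwise (· ≤ ·) := by
  let L := (P.map toLex.toEmbedding).sort (· ≤ ·)
  have hL : L.Pairwise (· ≤ ·) := Finset.pairwise_sort _ _
  have hmem : ∀ a ∈ L, ofLex a ∈ P := by
    intro a ha
    simpa [L] using ha
  have key : ∀ a ∈ L, ∀ b ∈ L, a ≤ b →
      (ofLex a).1 ≤ (ofLex b).1 ∧ (ofLex a).2 ≤ (ofLex b).2 := by
    intro a ha b hb hab
    have h := hP _ (hmem a ha) _ (hmem b hb)
    rw [Prod.Lex.le_iff] at hab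
    unfold Nested at h
    omega
  refine ⟨L.map ofLex, ?_, ?_, ?_⟩
  · rw [← Multiset.map_coe]
    simp only [L, Finset.sort_eq, Finset.map_val, Multiset.map_map]
    exact Multiset.map_id _
  · rw [List.map_map, List.pairwise_map]
    exact hL.imp_of_mem fun ha hb hab => (key _ ha _ hb hab).1
  · rw [List.map_map, List.pairwise_map]
    exact hL.imp_of_mem fun ha hb hab => (key _ ha _ hb hab).2

lemma chain_ext (P Q : Finset (ℕ × ℕ)) (hP : IsQueue P) (hQ : IsQueue Q)
    (h1 : P.val.map Prod.fst = Q.val.map Prod.fst)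
    (h2 : P.val.map Prod.snd = Q.val.map Prod.snd) : P = Q := by
  obtain ⟨l, hl, hl1, hl2⟩ := exists_sorted_list P hP
  obtain ⟨r, hr, hr1, hr2⟩ := exists_sorted_list Q hQ
  rw [← hl, ← hr, Multiset.map_coe, Multiset.map_coe, Multiset.coe_eq_coe] at h1 h2
  have e1 : l.map Prod.fst = r.map Prod.fst := h1.eq_of_pairwise' hl1 hr1
  have e2 : l.map Prod.snd = r.map Prod.snd := h2.eq_of_pairwise' hl2 hr2
  have : l = r := by
    rw [← List.zip_unzip l, ← List.zip_unzip r]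
    simp only [List.unzip_eq_map, e1, e2]
  apply Finset.val_injective
  rw [← hl, ← hr, this]

lemma relabel_symm_relabel (σ : Equiv.Perm ℕ) (n : ℕ) (E : Finset (ℕ × ℕ))
    (hE : IsOrderedGraph n E) : relabel σ.symm (relabel σ E) = E := by
  unfold relabel
  rw [Finset.image_image]
  conv_rhs => rw [← Finset.image_id (s := E)]
  apply Finset.image_congr
  intro e he
  have h := (hE e he).2.1
  rcases le_total (σ e.1) (σ e.2) with h' | h' <;> ext <;> simp [h', h]

lemma card_relabel (σ : Equiv.Perm ℕ) (n : ℕ) (E : Finset (ℕ × ℕ))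
    (hE : IsOrderedGraph n E) : (relabel σ E).card = E.card := by
  apply le_antisymm Finset.card_image_le
  conv_lhs => rw [← relabel_symm_relabel σ n E hE]
  exact Finset.card_image_le

lemma relabel_bound (σ : Equiv.Perm ℕ) (n : ℕ) (E : Finset (ℕ × ℕ))
    (hE : IsOrderedGraph n E) (hσ : ∀ v ∈ Finset.Icc 1 n, σ v ∈ Finset.Icc 1 n) :
    ∀ e ∈ relabel σ E, e.1 ≤ n ∧ e.2 ≤ n := by
  intro e he
  obtain ⟨f, hf, rfl⟩ := Finset.mem_image.1 he
  have h := hE f hf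
  have h1 := Finset.mem_Icc.1 (hσ f.1 (Finset.mem_Icc.2 (by omega)))
  have h2 := Finset.mem_Icc.1 (hσ f.2 (Finset.mem_Icc.2 (by omega)))
  simp only
  omega

/-- The finite type of codes: a vertex ordering, and two multisets of size `m` of pairs
(colour, vertex). -/
abbrev QueueCode (n k m : ℕ) : Type :=
  (Finset.Icc 1 n ↪ Finset.Icc 1 n) × Sym (Fin k × Fin (n + 1)) m × Sym (Fin k × Fin (n + 1)) m

/-- `t` encodes the graph `E`: its first component is an ordering `σ` of the vertices, and for some
partition of the relabelled graph into queues, given as a colouring `col`, the two multisets list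
the coloured left endpoints and the coloured right endpoints of the edges. -/
def IsCode (n k m : ℕ) (E : Finset (ℕ × ℕ)) (t : QueueCode n k m) : Prop :=
  ∃ (σ : Equiv.Perm ℕ) (col : ℕ × ℕ → Fin k),
    (∀ v ∈ Finset.Icc 1 n, σ v ∈ Finset.Icc 1 n) ∧
    (∀ v, ((t.1 v : Finset.Icc 1 n) : ℕ) = σ v) ∧
    (∀ i, IsQueue ((relabel σ E).filter (fun e => col e = i))) ∧
    (t.2.1 : Multiset _) = (relabel σ E).val.map (fun e => (col e, Fin.ofNat (n + 1) e.1)) ∧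
    (t.2.2 : Multiset _) = (relabel σ E).val.map (fun e => (col e, Fin.ofNat (n + 1) e.2))

lemma exists_isCode (n k m : ℕ) (hk : 0 < k) (E : Finset (ℕ × ℕ)) (hE : IsOrderedGraph n E)
    (hm : E.card = m) (hq : QueueNumberLE n k E) : ∃ t, IsCode n k m E t := by
  obtain ⟨σ, hσ, parts, hcov, -, -, hparts⟩ := hq
  have : ∃ col : ℕ × ℕ → Fin k, ∀ e ∈ relabel σ E, e ∈ parts (col e) := by
    have : ∀ e, ∃ i : Fin k, e ∈ relabel σ E → e ∈ parts i := by
      intro e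
      by_cases he : e ∈ relabel σ E
      · obtain ⟨i, hi⟩ := hcov e he
        exact ⟨i, fun _ => hi⟩
      · exact ⟨⟨0, hk⟩, fun h => absurd h he⟩
    choose col hcol using this
    exact ⟨col, hcol⟩
  obtain ⟨col, hcol⟩ := this
  have hcard : Multiset.card (relabel σ E).val = m := (card_relabel σ n E hE).trans hm
  refine ⟨⟨⟨fun v => ⟨σ v, hσ v v.2⟩, ?_⟩,
    ⟨(relabel σ E).val.map (fun e => (col e, Fin.ofNat (n + 1) e.1)), by simpa using hcard⟩,
    ⟨(relabel σ E).val.map (fun e => (col e, Fin.ofNat (n + 1) e.2)), by simpa using hcard⟩⟩,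
    σ, col, hσ, fun v => rfl, ?_, rfl, rfl⟩
  · intro v w h
    exact Subtype.ext (σ.injective (Subtype.ext_iff.1 h))
  · intro i e he f hf
    rw [Finset.mem_filter] at he hf
    exact hparts i e (he.2 ▸ hcol e he.1) f (hf.2 ▸ hcol f hf.1)

/-- The coordinates of the edges of colour `i` can be read off from the multiset of all coloured
coordinates. -/
lemma filter_coloured (n k : ℕ) (H : Finset (ℕ × ℕ)) (col : ℕ × ℕ → Fin k) (p : ℕ × ℕ → ℕ)
    (hp : ∀ e ∈ H, p e ≤ n) (i : Fin k) :
    (((H.val.map (fun e => (col e, Fin.ofNat (n + 1) (p e)))).filter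
      (fun x => x.1 = i)).map (fun x => (x.2 : ℕ))) =
      (H.filter (fun e => col e = i)).val.map p := by
  rw [Multiset.filter_map, Multiset.map_map, Finset.filter_val]
  apply Multiset.map_congr rfl
  intro e he
  have := hp e (Multiset.mem_filter.1 he).1
  simp only [Function.comp, Fin.val_ofNat]
  exact Nat.mod_eq_of_lt (by omega)

lemma IsCode.unique {n k m : ℕ} {E E' : Finset (ℕ × ℕ)} (hE : IsOrderedGraph n E)
    (hE' : IsOrderedGraph n E') {t : QueueCode n k m} (h : IsCode n k m E t)
    (h' : IsCode n k m E' t) : E = E' := by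
  obtain ⟨σ, col, hσ, hg, hq, hF, hG⟩ := h
  obtain ⟨τ, dol, hτ, hg', hq', hF', hG'⟩ := h'
  have hb := relabel_bound σ n E hE hσ
  have hb' := relabel_bound τ n E' hE' hτ
  have hparts : ∀ i, (relabel σ E).filter (fun e => col e = i) =
      (relabel τ E').filter (fun e => dol e = i) := by
    intro i
    apply chain_ext _ _ (hq i) (hq' i)
    · rw [← filter_coloured n k _ col Prod.fst (fun e he => (hb e he).1) i,
        ← filter_coloured n k _ dol Prod.fst (fun e he => (hb' e he).1) i, ← hF, ← hF']
    · rw [← filter_coloured n k _ col Prod.snd (fun e he => (hb e he).2) i,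
        ← filter_coloured n k _ dol Prod.snd (fun e he => (hb' e he).2) i, ← hG, ← hG']
  have hH : relabel σ E = relabel τ E' := by
    ext e
    constructor
    · intro he
      have : e ∈ (relabel σ E).filter (fun e' => col e' = col e) := by simp [he]
      rw [hparts] at this
      exact (Finset.mem_filter.1 this).1
    · intro he
      have : e ∈ (relabel τ E').filter (fun e' => dol e' = dol e) := by simp [he]
      rw [← hparts] at this
      exact (Finset.mem_filter.1 this).1
  -- `σ` and `τ` agree only on `{1, …, n}`, which contains every endpoint of `E'`.
  have hστ : relabel τ E' = relabel σ E' := by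
    apply Finset.image_congr
    intro e he
    have h := hE' e he
    have h1 : τ e.1 = σ e.1 := (hg' ⟨e.1, Finset.mem_Icc.2 (by omega)⟩).symm.trans (hg _)
    have h2 : τ e.2 = σ e.2 := (hg' ⟨e.2, Finset.mem_Icc.2 (by omega)⟩).symm.trans (hg _)
    simp only [h1, h2]
  rw [← relabel_symm_relabel σ n E hE, hH, hστ, relabel_symm_relabel σ n E' hE']

lemma ncard_le_card_code (n k m : ℕ) (hk : 0 < k) :
    {E : Finset (ℕ × ℕ) | IsOrderedGraph n E ∧ E.card = m ∧ QueueNumberLE n k E}.ncard ≤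
      n.factorial * (Nat.multichoose (k * (n + 1)) m) ^ 2 := by
  have hex : ∀ E : {E : Finset (ℕ × ℕ) | IsOrderedGraph n E ∧ E.card = m ∧ QueueNumberLE n k E},
      ∃ t, IsCode n k m E.1 t :=
    fun E => exists_isCode n k m hk E.1 E.2.1 E.2.2.1 E.2.2.2
  choose f hf using hex
  have hinj : Function.Injective f := by
    intro E E' h
    exact Subtype.ext (IsCode.unique E.2.1 E'.2.1 (hf E) (h ▸ hf E'))
  have h := Nat.card_le_card_of_injective f hinj
  rw [Nat.card_coe_set_eq] at h
  refine h.trans (le_of_eq ?_)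
  rw [Nat.card_eq_fintype_card, Fintype.card_prod, Fintype.card_prod, Fintype.card_embedding_eq,
    Sym.card_sym_eq_multichoose]
  simp [Nat.descFactorial_self, sq]

lemma multichoose_bound (n m k : ℕ) (hn : 0 < n) (hm : 0 < m) (h : 2 * m ≤ k * n) :
    (Nat.multichoose (k * (n + 1)) m : ℝ) ≤ (8 * k * n / m) ^ m := by
  have hm' : (0 : ℝ) < m := by exact_mod_cast hm
  have h1 : (Nat.multichoose (k * (n + 1)) m : ℝ) ≤
      ((k * (n + 1) + m - 1 : ℕ) : ℝ) ^ m / m.factorial := by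
    rw [Nat.multichoose_eq]
    exact Nat.choose_le_pow_div _ _
  -- `k * (n + 1) ≤ 2 * k * n` and `m ≤ k * n / 2`.
  have h2 : ((k * (n + 1) + m - 1 : ℕ) : ℝ) ≤ 5 / 2 * (k * n) := by
    have h3 : 2 * (k * (n + 1) + m - 1) ≤ 5 * (k * n) := by
      have : k ≤ k * n := Nat.le_mul_of_pos_right k hn
      rw [mul_add]
      omega
    have h4 : (2 : ℝ) * ((k * (n + 1) + m - 1 : ℕ) : ℝ) ≤ 5 * (k * n) := by exact_mod_cast h3
    linarith
  have h3 : (m : ℝ) ^ m / m.factorial ≤ 3 ^ m := by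
    refine (Real.pow_div_factorial_le_exp _ hm'.le m).trans ?_
    rw [← Real.exp_one_pow]
    exact pow_le_pow_left₀ (Real.exp_pos _).le Real.exp_one_lt_three.le _
  calc (Nat.multichoose (k * (n + 1)) m : ℝ)
      ≤ (5 / 2 * (k * n)) ^ m / m.factorial := h1.trans (by gcongr)
    _ = (5 / 2 * (k * n) / m) ^ m * ((m : ℝ) ^ m / m.factorial) := by
        rw [div_pow]
        field_simp
    _ ≤ (5 / 2 * (k * n) / m) ^ m * 3 ^ m := by gcongr
    _ = (15 / 2 * k * n / m) ^ m := by
        rw [← mul_pow]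
        ring
    _ ≤ (8 * k * n / m) ^ m := by
        gcongr
        norm_num

/-- There is an absolute constant `c > 0` such that for all positive integers
`n`, `m`, `k` with `2m ≤ k * n` and `k ≤ m`, the number of labelled graphs
(loops allowed, no parallel edges) on `{1, …, n}` with exactly `m` edges and
queue-number at most `k` is at most `(c * k * n / m) ^ (2 * m) * n!`. -/
theorem count_queueNumber_le :
    ∃ c : ℝ, 0 < c ∧ ∀ n m k : ℕ, 0 < n → 0 < m → 0 < k →
      2 * m ≤ k * n → k ≤ m →
      ({E : Finset (ℕ × ℕ) |
          IsOrderedGraph n E ∧ E.card = m ∧ QueueNumberLE n k E}.ncard : ℝ) ≤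
        (c * k * n / m) ^ (2 * m) * n.factorial := by
  refine ⟨8, by norm_num, ?_⟩
  intro n m k hn hm hk h _
  have h1 := ncard_le_card_code n k m hk
  have h2 := multichoose_bound n m k hn hm h
  calc _ ≤ ((n.factorial * (Nat.multichoose (k * (n + 1)) m) ^ 2 : ℕ) : ℝ) := by exact_mod_cast h1
    _ = (Nat.multichoose (k * (n + 1)) m : ℝ) ^ 2 * n.factorial := by
        push_cast
        ring
    _ ≤ ((8 * k * n / m) ^ m) ^ 2 * n.factorial := by gcongr
    _ = (8 * k * n / m) ^ (2 * m) * n.factorial := by rw [← pow_mul, mul_comm m 2]
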